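/- For any value distribution F on [0,∞) and a single additive buyer with two item values drawn i.i.d. from F, for every deterministic menu there exists a symmetric deterministic menu with at least as much expected revenue. -/

import Mathlib

open MeasureTheory

/-- Payment made by a utility-maximizing additive buyer with values `(v1, v2)` facing the
deterministic menu charging `a` for item 1, `b` for item 2, `c` for the pair;
ties are broken in favor of the higher payment. -/
noncomputable def pay (a b c v1 v2 : ℝ) : ℝ :=
  let u1 := v1 - a
  let u2 := v2 - b
  let u12 := v1 + v2 - c
  let m := max (max 0 u1) (max u2 u12)
  max (if u1 = m then a else 0) (max (if u2 = m then b else 0) (if u12 = m then c else 0))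

/-- Expected revenue of the menu `(a, b, c)` when values are drawn from `μ`. -/
noncomputable def rev (μ : Measure (ℝ × ℝ)) (a b c : ℝ) : ℝ :=
  ∫ v, pay a b c v.1 v.2 ∂μ

/-!
Write `D t` for the probability that a value is at least `t` and `R t = t * D t` for the revenue
from selling one item at the price `t`. The symmetric menu `(t, t, 2 * t)` earns `2 * R t`, so it
suffices to bound the revenue, or twice the revenue as a sum of two terms, by revenues of menus
`(t, t, c)` and by sums `R s + R t`, possibly with `R t` replaced by a convex combination.

If `c ≤ a + b`, the revenue is
`R a * (1 - D (c - a)) + R b * (1 - D (c - b)) + c * J (c - b) (c - a)`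
with `J x y = P(v1 ≥ x, v2 ≥ y, v1 + v2 ≥ c)`. Since `2 * J x y ≤ J x x + J y y`, twice the revenue
is at most `S a + S b`, where `S t = 2 * R t * (1 - D (c - t)) + c * J (c - t) (c - t)`. For
`c ≤ 2 * t` this is the revenue of `(t, t, c)`; otherwise `J (c - t) (c - t) = D (c - t) ^ 2` and
`S t` is at most `R t` plus a convex combination of `R t` and `R (c - t)`.

If `a + b ≤ c` and `a ≤ b`, splitting the price of the pair as `b + (c - b)` bounds the revenue by
`R b` plus a convex combination of `R a` and `R (c - b)`.
-/

open Set

lemma pay_eq_max (a b c v1 v2 : ℝ) :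
    pay a b c v1 v2 =
      max (if a ≤ v1 ∧ v2 - b ≤ v1 - a ∧ v2 ≤ c - a then a else 0)
        (max (if b ≤ v2 ∧ v1 - a ≤ v2 - b ∧ v1 ≤ c - b then b else 0)
          (if c ≤ v1 + v2 ∧ c - b ≤ v1 ∧ c - a ≤ v2 then c else 0)) := by
  unfold pay
  dsimp only
  -- A utility is the maximum exactly when it dominates the three others.
  congr 2 <;> grind

lemma pay_swap (a b c v1 v2 : ℝ) : pay a b c v1 v2 = pay b a c v2 v1 := by
  simp only [pay_eq_max, max_left_comm, add_comm v1 v2, and_comm (a := c - b ≤ v1)]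

lemma pay_nonneg {a : ℝ} (ha : 0 ≤ a) (b c v1 v2 : ℝ) : 0 ≤ pay a b c v1 v2 := by
  rw [pay_eq_max]
  exact le_max_of_le_left (ite_nonneg ha le_rfl)

/-- The value profiles at which the pair, at price `c`, is affordable and item 1 and item 2 are
worth at least `x` and `y`. A buyer weakly prefers the pair at `c` to every other option of the menu
`(a, b, c)` exactly on `pairRegion c (c - b) (c - a)`. -/
def pairRegion (c x y : ℝ) : Set (ℝ × ℝ) := Ici x ×ˢ Ici y ∩ {v | c ≤ v.1 + v.2}

-- Since `c ≤ a + b`, a buyer with `a ≤ v1` and `v2 < c - a` has `v2 < b`, so item 2 never competes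
-- with item 1, and vice versa.
lemma pay_eq_indicator_of_le_add {a b c : ℝ} (hac : a ≤ c) (hbc : b ≤ c) (hsub : c ≤ a + b)
    (v : ℝ × ℝ) :
    pay a b c v.1 v.2 =
      (Ici a ×ˢ Iio (c - a)).indicator (fun _ => a) v +
        (Iio (c - b) ×ˢ Ici b).indicator (fun _ => b) v +
        (pairRegion c (c - b) (c - a)).indicator (fun _ => c) v := by
  simp only [pay_eq_max, indicator_apply, pairRegion, mem_inter_iff, mem_prod, mem_Ici, mem_Iio,
    mem_ofPred_eq]
  grind

-- The price `c` of the pair is split into `b`, charged whenever `b ≤ v2`, and `c - b`.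
lemma pay_le_indicator_of_add_le {a b c : ℝ} (ha : 0 ≤ a) (hab : a ≤ b) (hsup : a + b ≤ c)
    (v : ℝ × ℝ) :
    pay a b c v.1 v.2 ≤
      (Ici a ×ˢ Iio b).indicator (fun _ => a) v +
        (univ ×ˢ Ici b).indicator (fun _ => b) v +
        (Ici (c - b) ×ˢ Ici (c - a)).indicator (fun _ => c - b) v := by
  simp only [pay_eq_max, indicator_apply, mem_prod, mem_univ, true_and, mem_Ici, mem_Iio]
  grind

lemma measurableSet_pairRegion (c x y : ℝ) : MeasurableSet (pairRegion c x y) :=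
  (measurableSet_Ici.prod measurableSet_Ici).inter
    (measurableSet_le measurable_const (measurable_fst.add measurable_snd))

lemma pairRegion_of_le_add {c x y : ℝ} (h : c ≤ x + y) : pairRegion c x y = Ici x ×ˢ Ici y :=
  inter_eq_left.2 fun _ hv => h.trans (add_le_add hv.1 hv.2)

lemma preimage_swap_pairRegion (c x y : ℝ) :
    Prod.swap ⁻¹' pairRegion c x y = pairRegion c y x := by
  ext v
  simp only [pairRegion, mem_preimage, mem_inter_iff, mem_prod, mem_Ici, mem_ofPred_eq,
    Prod.fst_swap, Prod.snd_swap, add_comm v.2, and_comm (a := x ≤ v.2)]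

lemma measureReal_pairRegion_swap (μ ν : Measure ℝ) [SFinite μ] [SFinite ν] (c x y : ℝ) :
    (μ.prod ν).real (pairRegion c x y) = (ν.prod μ).real (pairRegion c y x) := by
  rw [← preimage_swap_pairRegion c x y,
    Measure.measurePreserving_swap.measureReal_preimage
      (measurableSet_pairRegion c x y).nullMeasurableSet]

lemma measureReal_pairRegion_add_le (ν : Measure (ℝ × ℝ)) [IsFiniteMeasure ν] (c x y : ℝ) :
    ν.real (pairRegion c x y) + ν.real (pairRegion c y x) ≤
      ν.real (pairRegion c x x) + ν.real (pairRegion c y y) := by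
  wlog hxy : x ≤ y generalizing x y
  · linarith [this y x (le_of_not_ge hxy)]
  have hunion : pairRegion c x y ∪ pairRegion c y x ⊆ pairRegion c x x :=
    union_subset (inter_subset_inter_left _ (prod_mono_right (Ici_subset_Ici.2 hxy)))
      (inter_subset_inter_left _ (prod_mono_left (Ici_subset_Ici.2 hxy)))
  have hinter : pairRegion c x y ∩ pairRegion c y x ⊆ pairRegion c y y :=
    fun _ hv => ⟨⟨hv.2.1.1, hv.1.1.2⟩, hv.1.2⟩
  rw [← measureReal_union_add_inter (measurableSet_pairRegion c y x)]
  exact add_le_add (measureReal_mono hunion) (measureReal_mono hinter)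

lemma two_mul_measureReal_pairRegion_le (μ : Measure ℝ) [IsFiniteMeasure μ] (c x y : ℝ) :
    2 * (μ.prod μ).real (pairRegion c x y) ≤
      (μ.prod μ).real (pairRegion c x x) + (μ.prod μ).real (pairRegion c y y) := by
  linarith [measureReal_pairRegion_add_le (μ.prod μ) c x y, measureReal_pairRegion_swap μ μ c x y]

/-- The revenue from offering a single item, whose value is drawn from `μ`, at the price `t`. -/
noncomputable def singleItemRev (μ : Measure ℝ) (t : ℝ) : ℝ := t * μ.real (Ici t)

lemma singleItemRev_nonneg (μ : Measure ℝ) {t : ℝ} (ht : 0 ≤ t) : 0 ≤ singleItemRev μ t :=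
  mul_nonneg ht measureReal_nonneg

/-- The formula of `rev_eq_of_le_add` at the prices `(t, t, c)`, which is the revenue of that menu
only if `c ≤ 2 * t`. It is the contribution of an item priced `t` once the revenue of a menu is
averaged with that of its mirror image, which separates the two item prices. -/
noncomputable def symmetrizedRev (μ : Measure ℝ) (c t : ℝ) : ℝ :=
  2 * (singleItemRev μ t * (1 - μ.real (Ici (c - t)))) +
    c * (μ.prod μ).real (pairRegion c (c - t) (c - t))

lemma symmetrizedRev_le_of_two_mul_le (μ : Measure ℝ) [IsFiniteMeasure μ] {c t : ℝ}
    (ht : 0 ≤ t) (hsup : 2 * t ≤ c) :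
    symmetrizedRev μ c t ≤
      singleItemRev μ t + ((1 - μ.real (Ici (c - t))) * singleItemRev μ t +
        μ.real (Ici (c - t)) * singleItemRev μ (c - t)) := by
  have hanti : t * μ.real (Ici (c - t)) ≤ singleItemRev μ t :=
    mul_le_mul_of_nonneg_left (measureReal_mono (Ici_subset_Ici.2 (by linarith))) ht
  have hpair : c * μ.real (Ici (c - t)) ^ 2 ≤
      μ.real (Ici (c - t)) * (singleItemRev μ t + singleItemRev μ (c - t)) :=
    calc c * μ.real (Ici (c - t)) ^ 2
        = μ.real (Ici (c - t)) * (t * μ.real (Ici (c - t)) + singleItemRev μ (c - t)) := by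
          rw [singleItemRev]; ring
      _ ≤ _ := by gcongr
  rw [symmetrizedRev, pairRegion_of_le_add (by linarith), measureReal_prod_prod, ← sq]
  linarith

lemma rev_swap (μ ν : Measure ℝ) [SFinite μ] [SFinite ν] (a b c : ℝ) :
    rev (μ.prod ν) a b c = rev (ν.prod μ) b a c := by
  unfold rev
  rw [← integral_prod_swap]
  exact integral_congr_ae (.of_forall fun v => pay_swap a b c v.2 v.1)

lemma integral_indicator_const_add_add {Ω : Type*} [MeasurableSpace Ω] (P : Measure Ω)
    [IsFiniteMeasure P] {s t u : Set Ω} (hs : MeasurableSet s) (ht : MeasurableSet t)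
    (hu : MeasurableSet u) (x y z : ℝ) :
    ∫ ω, (s.indicator (fun _ => x) ω + t.indicator (fun _ => y) ω + u.indicator (fun _ => z) ω) ∂P =
      P.real s * x + P.real t * y + P.real u * z := by
  rw [integral_add (by fun_prop (disch := assumption)) (by fun_prop (disch := assumption)),
    integral_add (by fun_prop (disch := assumption)) (by fun_prop (disch := assumption))]
  simp only [integral_indicator_const _ hs, integral_indicator_const _ ht,
    integral_indicator_const _ hu, smul_eq_mul]

section Revenue

variable (μ ν : Measure ℝ) [IsProbabilityMeasure μ] [IsProbabilityMeasure ν]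

lemma probReal_Iio (t : ℝ) : μ.real (Iio t) = 1 - μ.real (Ici t) := by
  rw [← compl_Ici, probReal_compl_eq_one_sub measurableSet_Ici]

lemma rev_eq_of_le_add {a b c : ℝ} (hac : a ≤ c) (hbc : b ≤ c) (hsub : c ≤ a + b) :
    rev (μ.prod ν) a b c =
      singleItemRev μ a * (1 - ν.real (Ici (c - a))) +
        singleItemRev ν b * (1 - μ.real (Ici (c - b))) +
        c * (μ.prod ν).real (pairRegion c (c - b) (c - a)) := by
  simp only [rev, pay_eq_indicator_of_le_add hac hbc hsub]
  rw [integral_indicator_const_add_add _ (measurableSet_Ici.prod measurableSet_Iio)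
    (measurableSet_Iio.prod measurableSet_Ici) (measurableSet_pairRegion _ _ _)]
  simp only [measureReal_prod_prod, probReal_Iio, singleItemRev]
  ring

lemma rev_le_of_add_le {a b c : ℝ} (ha : 0 ≤ a) (hab : a ≤ b) (hsup : a + b ≤ c) :
    rev (μ.prod ν) a b c ≤
      singleItemRev ν b + singleItemRev μ a * (1 - ν.real (Ici b)) +
        singleItemRev μ (c - b) * ν.real (Ici (c - a)) := by
  have hfst : MeasurableSet (Ici a ×ˢ Iio b) := measurableSet_Ici.prod measurableSet_Iio
  have hsnd : MeasurableSet ((univ : Set ℝ) ×ˢ Ici b) := MeasurableSet.univ.prod measurableSet_Ici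
  have hpair : MeasurableSet (Ici (c - b) ×ˢ Ici (c - a)) :=
    measurableSet_Ici.prod measurableSet_Ici
  refine (integral_mono_of_nonneg (.of_forall fun _ => pay_nonneg ha b c _ _)
    (by fun_prop (disch := assumption))
    (.of_forall (pay_le_indicator_of_add_le ha hab hsup))).trans_eq ?_
  rw [integral_indicator_const_add_add _ hfst hsnd hpair]
  simp only [measureReal_prod_prod, probReal_Iio, probReal_univ, singleItemRev]
  ring

lemma rev_two_mul {t : ℝ} (ht : 0 ≤ t) : rev (μ.prod μ) t t (2 * t) = 2 * singleItemRev μ t := by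
  have htc : t ≤ 2 * t := by linarith
  rw [rev_eq_of_le_add μ μ htc htc (two_mul t).le, two_mul, add_sub_cancel_right,
    pairRegion_of_le_add le_rfl, measureReal_prod_prod, singleItemRev]
  ring

lemma rev_self_eq_symmetrizedRev {c t : ℝ} (htc : t ≤ c) (hsub : c ≤ 2 * t) :
    rev (μ.prod μ) t t c = symmetrizedRev μ c t := by
  rw [rev_eq_of_le_add μ μ htc htc (by linarith), symmetrizedRev]
  ring

lemma two_mul_rev_le_symmetrizedRev_add {a b c : ℝ} (hac : a ≤ c) (hbc : b ≤ c)
    (hsub : c ≤ a + b) :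
    2 * rev (μ.prod μ) a b c ≤ symmetrizedRev μ c a + symmetrizedRev μ c b := by
  have hc : 0 ≤ c := by linarith
  have hpair := mul_le_mul_of_nonneg_left
    (two_mul_measureReal_pairRegion_le μ c (c - b) (c - a)) hc
  rw [rev_eq_of_le_add μ μ hac hbc hsub, symmetrizedRev, symmetrizedRev]
  linarith

end Revenue

/-- The revenue `r` is matched or exceeded, for two values drawn independently from `μ`, by a
symmetric menu in which the pair costs no more than its two items bought separately. -/
def SymmetricAchievable (μ : Measure ℝ) (r : ℝ) : Prop :=
  ∃ p q : ℝ, 0 ≤ p ∧ p ≤ q ∧ q ≤ 2 * p ∧ r ≤ rev (μ.prod μ) p p q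

section SymmetricAchievable

variable {μ : Measure ℝ}

lemma SymmetricAchievable.mono {r s : ℝ} (hs : SymmetricAchievable μ s) (hrs : r ≤ s) :
    SymmetricAchievable μ r := by
  obtain ⟨p, q, hp, hpq, hqp, hrev⟩ := hs
  exact ⟨p, q, hp, hpq, hqp, hrs.trans hrev⟩

lemma SymmetricAchievable.of_two_mul_le_add {r s t : ℝ} (hs : SymmetricAchievable μ s)
    (ht : SymmetricAchievable μ t) (h : 2 * r ≤ s + t) : SymmetricAchievable μ r := by
  rcases le_total s t with hst | hts
  · exact ht.mono (by linarith)
  · exact hs.mono (by linarith)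

variable [IsProbabilityMeasure μ]

lemma symmetricAchievable_two_mul_singleItemRev {t : ℝ} (ht : 0 ≤ t) :
    SymmetricAchievable μ (2 * singleItemRev μ t) :=
  ⟨t, 2 * t, ht, by linarith, le_rfl, (rev_two_mul μ ht).ge⟩

lemma symmetricAchievable_singleItemRev_add {s t : ℝ} (hs : 0 ≤ s) (ht : 0 ≤ t) :
    SymmetricAchievable μ (singleItemRev μ s + singleItemRev μ t) :=
  (symmetricAchievable_two_mul_singleItemRev hs).of_two_mul_le_add
    (symmetricAchievable_two_mul_singleItemRev ht) (by linarith)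

lemma symmetricAchievable_singleItemRev_add_convexCombo {s t u w : ℝ} (hs : 0 ≤ s) (ht : 0 ≤ t)
    (hu : 0 ≤ u) (hw0 : 0 ≤ w) (hw1 : w ≤ 1) :
    SymmetricAchievable μ
      (singleItemRev μ s + ((1 - w) * singleItemRev μ t + w * singleItemRev μ u)) := by
  have hcombo := Convex.combo_le_max (singleItemRev μ t) (singleItemRev μ u) (sub_nonneg.2 hw1) hw0
    (sub_add_cancel 1 w)
  rcases le_max_iff.1 hcombo with h | h
  · exact (symmetricAchievable_singleItemRev_add hs ht).mono (add_le_add_right h _)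
  · exact (symmetricAchievable_singleItemRev_add hs hu).mono (add_le_add_right h _)

lemma symmetricAchievable_symmetrizedRev {c t : ℝ} (ht : 0 ≤ t) (htc : t ≤ c) :
    SymmetricAchievable μ (symmetrizedRev μ c t) := by
  rcases le_total c (2 * t) with hsub | hsup
  · exact ⟨t, c, ht, htc, hsub, (rev_self_eq_symmetrizedRev μ htc hsub).ge⟩
  · exact (symmetricAchievable_singleItemRev_add_convexCombo ht ht (sub_nonneg.2 htc)
      measureReal_nonneg measureReal_le_one).mono (symmetrizedRev_le_of_two_mul_le μ ht hsup)

lemma symmetricAchievable_rev_of_le_add {a b c : ℝ} (hac : a ≤ c) (hbc : b ≤ c)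
    (hsub : c ≤ a + b) : SymmetricAchievable μ (rev (μ.prod μ) a b c) :=
  (symmetricAchievable_symmetrizedRev (by linarith) hac).of_two_mul_le_add
    (symmetricAchievable_symmetrizedRev (by linarith) hbc)
    (two_mul_rev_le_symmetrizedRev_add μ hac hbc hsub)

lemma symmetricAchievable_rev_of_add_le {a b c : ℝ} (ha : 0 ≤ a) (hb : 0 ≤ b) (hsup : a + b ≤ c) :
    SymmetricAchievable μ (rev (μ.prod μ) a b c) := by
  wlog hab : a ≤ b generalizing a b
  · rw [rev_swap]
    exact this hb ha (by linarith) (le_of_not_ge hab)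
  have hcb : 0 ≤ c - b := by linarith
  refine (symmetricAchievable_singleItemRev_add_convexCombo hb ha hcb measureReal_nonneg
    (measureReal_le_one (μ := μ) (s := Ici b))).mono ((rev_le_of_add_le μ μ ha hab hsup).trans ?_)
  have hanti : μ.real (Ici (c - a)) ≤ μ.real (Ici b) :=
    measureReal_mono (Ici_subset_Ici.2 (by linarith))
  linarith [mul_le_mul_of_nonneg_right hanti (singleItemRev_nonneg μ hcb)]

end SymmetricAchievable

theorem stmt12_general (μ : Measure ℝ) [IsProbabilityMeasure μ]
    (a b c : ℝ) (ha : 0 ≤ a) (hb : 0 ≤ b) (hc : max a b ≤ c) :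
    ∃ p q : ℝ, 0 ≤ p ∧ p ≤ q ∧ q ≤ 2 * p ∧ rev (μ.prod μ) a b c ≤ rev (μ.prod μ) p p q := by
  obtain ⟨hac, hbc⟩ := max_le_iff.1 hc
  rcases le_total c (a + b) with hsub | hsup
  · exact symmetricAchievable_rev_of_le_add hac hbc hsub
  · exact symmetricAchievable_rev_of_add_le ha hb hsup

theorem stmt12 (μ : Measure ℝ) [IsProbabilityMeasure μ] (hsupp : μ (Set.Iio 0) = 0)
    (a b c : ℝ) (ha : 0 ≤ a) (hb : 0 ≤ b) (hc : max a b ≤ c) :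
    ∃ p q : ℝ, 0 ≤ p ∧ p ≤ q ∧ rev (μ.prod μ) a b c ≤ rev (μ.prod μ) p p q := by
  obtain ⟨p, q, hp, hpq, -, hrev⟩ := stmt12_general μ a b c ha hb hc
  exact ⟨p, q, hp, hpq, hrev⟩
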